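/- arXiv:1409.0668 — 2 statements merged into one kernel-verified Lean document; each statement's English description precedes it below -/
import Mathlib

section
/- The set {x⃗ ∈ 𝕃 : 0 ≤ x⃗ and not ω⃗ ≤ x⃗} equals the interval [0, δ⃗], where δ⃗ := d c⃗ + 2 ω⃗. -/
/-- The subgroup of relations `p i • x⃗_i − c⃗` inside the free abelian group
`(Fin n → ℤ) × ℤ` on the generators `x⃗_1, …, x⃗_n, c⃗`. -/
def GLrels (n : ℕ) (p : Fin n → ℕ) : AddSubgroup ((Fin n → ℤ) × ℤ) :=
  AddSubgroup.closure (Set.range fun i : Fin n => ((Pi.single i (p i : ℤ), -1) : (Fin n → ℤ) × ℤ))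

/-- The grading group `𝕃 = ⟨x⃗_1, …, x⃗_n, c⃗⟩ / ⟨p_i x⃗_i − c⃗⟩`. -/
abbrev GLgroup (n : ℕ) (p : Fin n → ℕ) : Type :=
  ((Fin n → ℤ) × ℤ) ⧸ GLrels n p

/-- The generator `x⃗_i` of `𝕃`. -/
def GLx (n : ℕ) (p : Fin n → ℕ) (i : Fin n) : GLgroup n p :=
  QuotientAddGroup.mk (Pi.single i 1, 0)

/-- The generator `c⃗` of `𝕃`. -/
def GLc (n : ℕ) (p : Fin n → ℕ) : GLgroup n p :=
  QuotientAddGroup.mk (0, 1)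

/-- The positive cone `𝕃_+`: the submonoid of `𝕃` generated by `x⃗_1, …, x⃗_n` and `c⃗`. -/
def GLplus (n : ℕ) (p : Fin n → ℕ) : AddSubmonoid (GLgroup n p) :=
  AddSubmonoid.closure ({GLc n p} ∪ Set.range (GLx n p))

/-- The partial order relation on `𝕃`: `x⃗ ≤ y⃗` iff `y⃗ − x⃗ ∈ 𝕃_+`. -/
def GLle (n : ℕ) (p : Fin n → ℕ) (x y : GLgroup n p) : Prop :=
  y - x ∈ GLplus n p

/-- The dualizing element `ω⃗ = (n − d − 1) c⃗ − Σ_i x⃗_i` of `𝕃`. -/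
def GLomega (d n : ℕ) (p : Fin n → ℕ) : GLgroup n p :=
  ((n : ℤ) - d - 1) • GLc n p - ∑ i, GLx n p i

/-- The dominant element `δ⃗ = d c⃗ + 2 ω⃗`. -/
def GLdelta (d n : ℕ) (p : Fin n → ℕ) : GLgroup n p :=
  (d : ℤ) • GLc n p + (2 : ℤ) • GLomega d n p

/-- The coefficient of `c⃗` in the normal form. -/
def GLf (n : ℕ) (p : Fin n → ℕ) (w : (Fin n → ℤ) × ℤ) : ℤ := w.2 + ∑ i, w.1 i / (p i : ℤ)

lemma GLf_rel (n : ℕ) (p : Fin n → ℕ) (hp : ∀ i, 0 < p i) (r : (Fin n → ℤ) × ℤ)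
    (hr : r ∈ GLrels n p) : ∀ w, GLf n p (w + r) = GLf n p w := by
  unfold GLrels at hr
  induction hr using AddSubgroup.closure_induction with
  | mem x hx =>
    obtain ⟨i, rfl⟩ := hx
    intro w
    have h : ∀ j, (w.1 j + (Pi.single i (p i : ℤ) : Fin n → ℤ) j) / (p j : ℤ)
        = w.1 j / (p j : ℤ) + (Pi.single i (1 : ℤ) : Fin n → ℤ) j := by
      intro j
      have hj : (p j : ℤ) ≠ 0 := by have := hp j; omega
      by_cases hij : j = i
      · subst hij
        simp [Int.add_ediv_of_dvd_right, Int.ediv_self hj]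
      · simp [hij]
    simp only [GLf, Prod.fst_add, Prod.snd_add, Pi.add_apply, h, Finset.sum_add_distrib,
      Finset.sum_pi_single', Finset.mem_univ, if_true]
    ring
  | zero => simp
  | add x y _ _ hx hy => intro w; rw [← add_assoc, hy, hx]
  | neg x _ hx => intro w; rw [← hx (w + -x)]; simp

lemma GLf_add (n : ℕ) (p : Fin n → ℕ) (hp : ∀ i, 0 < p i) (v w : (Fin n → ℤ) × ℤ) :
    GLf n p v + GLf n p w ≤ GLf n p (v + w) := by
  have : ∑ i, v.1 i / (p i : ℤ) + ∑ i, w.1 i / (p i : ℤ) ≤ ∑ i, (v.1 i + w.1 i) / (p i : ℤ) := by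
    rw [← Finset.sum_add_distrib]
    refine Finset.sum_le_sum fun i _ => ?_
    have hi : (0 : ℤ) < p i := by exact_mod_cast hp i
    rw [Int.le_ediv_iff_mul_le hi, add_mul]
    exact add_le_add (Int.ediv_mul_le _ hi.ne') (Int.ediv_mul_le _ hi.ne')
  simp only [GLf, Prod.fst_add, Prod.snd_add, Pi.add_apply]
  omega

lemma GL_mk (n : ℕ) (p : Fin n → ℕ) (w : (Fin n → ℤ) × ℤ) :
    (QuotientAddGroup.mk w : GLgroup n p) = ∑ i, w.1 i • GLx n p i + w.2 • GLc n p := by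
  have : w = ∑ i, w.1 i • ((Pi.single i 1, 0) : (Fin n → ℤ) × ℤ) + w.2 • ((0, 1) : (Fin n → ℤ) × ℤ) := by
    refine Prod.ext ?_ ?_
    · ext j
      simp [Prod.fst_sum, Finset.sum_apply, Pi.single_apply]
    · simp [Prod.snd_sum]
  have h2 := congrArg (QuotientAddGroup.mk' (GLrels n p)) this
  rw [map_add, map_sum] at h2
  simp only [map_zsmul] at h2
  exact h2

lemma GL_rel (n : ℕ) (p : Fin n → ℕ) (i : Fin n) : (p i : ℤ) • GLx n p i = GLc n p := by
  have h : ((Pi.single i (p i : ℤ), -1) : (Fin n → ℤ) × ℤ) ∈ GLrels n p :=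
    AddSubgroup.subset_closure ⟨i, rfl⟩
  have h2 := (QuotientAddGroup.eq_zero_iff _).2 h
  rw [← sub_eq_zero, ← h2]
  change (QuotientAddGroup.mk ((p i : ℤ) • ((Pi.single i 1, 0) : (Fin n → ℤ) × ℤ) - (0, 1)) : GLgroup n p) = _
  congr 1
  refine Prod.ext ?_ ?_
  · ext j
    simp [Pi.single_apply]
  · simp

lemma GLplus_iff (n : ℕ) (p : Fin n → ℕ) (hp : ∀ i, 0 < p i) (w : (Fin n → ℤ) × ℤ) :
    (QuotientAddGroup.mk w : GLgroup n p) ∈ GLplus n p ↔ 0 ≤ GLf n p w := by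
  constructor
  · intro h
    have key : ∀ y ∈ GLplus n p, ∃ v : (Fin n → ℤ) × ℤ,
        (QuotientAddGroup.mk v : GLgroup n p) = y ∧ 0 ≤ GLf n p v := by
      intro y hy
      unfold GLplus at hy
      induction hy using AddSubmonoid.closure_induction with
      | mem x hx =>
        rcases hx with hx | ⟨i, rfl⟩
        · rw [Set.mem_singleton_iff] at hx
          exact ⟨(0, 1), hx.symm, by simp [GLf]⟩
        · refine ⟨(Pi.single i 1, 0), rfl, ?_⟩
          simp only [GLf, zero_add]
          refine Finset.sum_nonneg fun j _ => Int.ediv_nonneg ?_ (by positivity)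
          by_cases hij : j = i
          · subst hij; simp
          · simp [hij]
      | zero => exact ⟨0, rfl, by simp [GLf]⟩
      | add x y _ _ hx hy =>
        obtain ⟨a, rfl, ha⟩ := hx
        obtain ⟨b, rfl, hb⟩ := hy
        exact ⟨a + b, rfl, (add_nonneg ha hb).trans (GLf_add n p hp a b)⟩
    obtain ⟨v, hv, h0⟩ := key _ h
    have := GLf_rel n p hp _ (QuotientAddGroup.eq.1 hv) v
    rw [add_neg_cancel_left] at this
    rwa [this]
  · intro h
    have e : (QuotientAddGroup.mk w : GLgroup n p)
        = ∑ i, (w.1 i % (p i : ℤ)) • GLx n p i + GLf n p w • GLc n p := by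
      have hs : (∑ i, w.1 i / (p i : ℤ)) • GLc n p = ∑ i, (w.1 i / (p i : ℤ)) • GLc n p :=
        map_sum (zmultiplesHom (GLgroup n p) (GLc n p)) _ _
      rw [GL_mk, GLf, add_zsmul, hs, add_comm (w.2 • GLc n p), ← add_assoc,
        ← Finset.sum_add_distrib]
      congr 1
      refine Finset.sum_congr rfl fun i _ => ?_
      rw [← GL_rel n p i, ← mul_zsmul', ← add_zsmul, Int.emod_add_mul_ediv]
    have hz : ∀ (a : ℤ) (y : GLgroup n p), 0 ≤ a → y ∈ GLplus n p → a • y ∈ GLplus n p := by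
      intro a y ha hy
      lift a to ℕ using ha
      rw [natCast_zsmul]
      exact AddSubmonoid.nsmul_mem _ hy a
    rw [e]
    refine add_mem (sum_mem fun i _ => hz _ _ (Int.emod_nonneg _ ?_) ?_) (hz _ _ h ?_)
    · have := hp i; omega
    · exact AddSubmonoid.subset_closure (Or.inr ⟨i, rfl⟩)
    · exact AddSubmonoid.subset_closure (Or.inl rfl)

lemma GL_dual (d n : ℕ) (p : Fin n → ℕ) (hp : ∀ i, 0 < p i) (y : GLgroup n p) :
    (d : ℤ) • GLc n p + GLomega d n p - y ∈ GLplus n p ↔ ¬ y ∈ GLplus n p := by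
  obtain ⟨w, rfl⟩ := QuotientAddGroup.mk_surjective y
  have e : (d : ℤ) • GLc n p + GLomega d n p - (QuotientAddGroup.mk w : GLgroup n p)
      = QuotientAddGroup.mk ((fun i => -1 - w.1 i, (n : ℤ) - 1 - w.2) : (Fin n → ℤ) × ℤ) := by
    rw [GL_mk, GL_mk, GLomega]
    simp only [sub_smul, neg_smul, one_smul, Finset.sum_sub_distrib, Finset.sum_neg_distrib]
    abel
  rw [e, GLplus_iff n p hp, GLplus_iff n p hp]
  have h : ∀ i, (-1 - w.1 i) / (p i : ℤ) = -1 - w.1 i / (p i : ℤ) := by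
    intro i
    have hi : (0 : ℤ) < p i := by exact_mod_cast hp i
    have h1 := Int.emod_add_mul_ediv (w.1 i) (p i)
    have h2 := Int.emod_nonneg (w.1 i) hi.ne'
    have h3 := Int.emod_lt_of_pos (w.1 i) hi
    refine ((Int.ediv_emod_unique (r := p i - 1 - w.1 i % p i) hi).2 ⟨?_, ?_, ?_⟩).1
    · linarith
    · omega
    · omega
  have : GLf n p (fun i => -1 - w.1 i, (n : ℤ) - 1 - w.2) = -1 - GLf n p w := by
    simp only [GLf, h, Finset.sum_sub_distrib]
    simp
    ring
  rw [this]
  omega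

/-- `{x⃗ ∈ 𝕃 : 0 ≤ x⃗ and ¬ ω⃗ ≤ x⃗} = [0, δ⃗]` where `δ⃗ = d c⃗ + 2 ω⃗`. -/
theorem interval_dominant (d n : ℕ) (hd : 1 ≤ d) (p : Fin n → ℕ) (hp : ∀ i, 0 < p i) :
    {x : GLgroup n p | GLle n p 0 x ∧ ¬ GLle n p (GLomega d n p) x} =
      {x : GLgroup n p | GLle n p 0 x ∧ GLle n p x (GLdelta d n p)} := by
  ext x
  simp only [Set.mem_ofPred_eq, GLle]
  refine and_congr_right fun _ => ?_
  rw [← GL_dual d n p hp, GLdelta]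
  have : (d : ℤ) • GLc n p + GLomega d n p - (x - GLomega d n p)
      = (d : ℤ) • GLc n p + (2 : ℤ) • GLomega d n p - x := by
    rw [two_zsmul]; abel
  rw [this]
end

section
/- Assume n ≥ d + 1 and that the hyperplanes are in general position. Let J ⊆ {1,…,n} with |J| = n − d − 1 and let J^c be its complement, so |J^c| = d + 1. Then the images of the elements X_i^{p_i} for i ∈ J^c form a regular sequence in R, and the quotient ring F := R/(X_i^{p_i} ∣ i ∈ J^c) is a finite-dimensional k-vector space. -/
open MvPolynomial

/-- The polynomial `h_i = X_i^{p_i} − ℓ_i` in `S = k[T_0,…,T_d, X_1,…,X_n]`, where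
`ℓ_i = Σ_j λ_{ij} T_j`; the `T`'s are the variables indexed by `Sum.inl` and the `X`'s
are the variables indexed by `Sum.inr`. -/
noncomputable def GLh (k : Type*) [Field k] (d n : ℕ) (p : Fin n → ℕ)
    (lam : Fin n → Fin (d + 1) → k) (i : Fin n) :
    MvPolynomial (Fin (d + 1) ⊕ Fin n) k :=
  X (Sum.inr i) ^ p i - ∑ j, C (lam i j) * X (Sum.inl j)

/-- The Geigle–Lenzing complete intersection `R = S/(h_1, …, h_n)`. -/
abbrev GLring (k : Type*) [Field k] (d n : ℕ) (p : Fin n → ℕ)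
    (lam : Fin n → Fin (d + 1) → k) : Type _ :=
  MvPolynomial (Fin (d + 1) ⊕ Fin n) k ⧸ Ideal.span (Set.range (GLh k d n p lam))

universe u

/-- Existence of a finite free algebra with a versal tuple of roots `x_i ^ p_i = a_i`. -/
theorem GL_exists_roots (n : ℕ) : ∀ (A : Type u) [CommRing A] (p : Fin n → ℕ)
    (_ : ∀ i, 0 < p i) (a : Fin n → A),
    ∃ (R : Type u) (_ : CommRing R) (_ : Algebra A R) (_ : Module.Finite A R)
      (_ : Module.Free A R) (x : Fin n → R),
      (∀ i, x i ^ p i = algebraMap A R (a i)) ∧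
      ∀ (B : Type u) [CommRing B] [Algebra A B] (b : Fin n → B),
        (∀ i, b i ^ p i = algebraMap A B (a i)) → ∃ f : R →ₐ[A] B, ∀ i, f (x i) = b i := by
  induction n with
  | zero =>
    intro A _ p hp a
    exact ⟨A, inferInstance, inferInstance, inferInstance, inferInstance, fun i => i.elim0,
      fun i => i.elim0, fun B _ _ b hb => ⟨Algebra.ofId A B, fun i => i.elim0⟩⟩
  | succ n ih =>
    intro A _ p hp a
    obtain ⟨R, _, _, _, _, x, hx, hR⟩ := ih A (fun i => p i.succ) (fun i => hp _)
      (fun i => a i.succ)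
    let g : Polynomial R := Polynomial.X ^ p 0 - Polynomial.C (algebraMap A R (a 0))
    have hg : g.Monic := Polynomial.monic_X_pow_sub_C _ (hp 0).ne'
    have := hg.free_adjoinRoot
    have := hg.finite_adjoinRoot
    refine ⟨AdjoinRoot g, inferInstance, inferInstance, Module.Finite.trans R _,
      Module.Free.trans (S := R), Fin.cons (AdjoinRoot.root g) (fun i => AdjoinRoot.of g (x i)),
      ?_, ?_⟩
    · intro i
      refine Fin.cases ?_ (fun i => ?_) i
      · have h : Polynomial.eval₂ (AdjoinRoot.of g) (AdjoinRoot.root g) g = 0 :=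
          AdjoinRoot.eval₂_root g
        simp only [g, Polynomial.eval₂_sub, Polynomial.eval₂_pow, Polynomial.eval₂_X,
          Polynomial.eval₂_C] at h
        simp only [Fin.cons_zero]
        exact sub_eq_zero.mp h
      · simp only [Fin.cons_succ]
        rw [← map_pow, hx]
        rfl
    · intro B _ _ b hb
      obtain ⟨f, hf⟩ := hR B (fun i => b i.succ) (fun i => hb _)
      refine ⟨AdjoinRoot.liftAlgHom g f (b 0) ?_, ?_⟩
      · simp [g, Polynomial.eval₂_sub, hb]
      · intro i
        refine Fin.cases ?_ (fun i => ?_) i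
        · simp
        · simp [hf]

/-- The map `k[Y_0,…,Y_d] → R` sending `Y_m` to `X_{σ m}^{p}`. -/
noncomputable def GLphi (k : Type*) [Field k] (d n : ℕ) (p : Fin n → ℕ)
    (lam : Fin n → Fin (d + 1) → k) (s : Fin (d + 1) → Fin n) :
    MvPolynomial (Fin (d + 1)) k →+* GLring k d n p lam :=
  eval₂Hom (algebraMap k (GLring k d n p lam))
    (fun m => Ideal.Quotient.mk _ (X (Sum.inr (s m)) ^ p (s m)))

theorem GL_rel_s15 (k : Type*) [Field k] (d n : ℕ) (p : Fin n → ℕ)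
    (lam : Fin n → Fin (d + 1) → k) (i : Fin n) :
    (Ideal.Quotient.mk (Ideal.span (Set.range (GLh k d n p lam))) (X (Sum.inr i))) ^ p i =
    ∑ j, algebraMap k (GLring k d n p lam) (lam i j) *
      Ideal.Quotient.mk (Ideal.span (Set.range (GLh k d n p lam))) (X (Sum.inl j)) := by
  have h : Ideal.Quotient.mk (Ideal.span (Set.range (GLh k d n p lam))) (GLh k d n p lam i) = 0 :=
    Ideal.Quotient.eq_zero_iff_mem.mpr (Ideal.subset_span ⟨i, rfl⟩)
  simp only [GLh, map_sub, map_pow, map_sum, map_mul] at h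
  exact sub_eq_zero.mp h

theorem GL_retract {A B R : Type u} [CommRing A] [CommRing B] [CommRing R] [Algebra A R]
    [Module.Finite A R] [Module.Free A R] (φ : A →+* B) (f : R →+* B) (g : B →+* R)
    (hf : ∀ a, f (algebraMap A R a) = φ a) (hg : ∀ a, g (φ a) = algebraMap A R a)
    (hfg : ∀ y, f (g y) = y) : φ.Finite ∧ φ.Flat := by
  let _ : Algebra A B := φ.toAlgebra
  let fA : R →ₐ[A] B := { f with commutes' := hf }
  let gA : B →ₐ[A] R := { g with commutes' := hg }
  refine ⟨?_, ?_⟩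
  · change Module.Finite A B
    exact Module.Finite.of_surjective fA.toLinearMap (fun y => ⟨g y, hfg y⟩)
  · change Module.Flat A B
    exact Module.Flat.of_retract gA.toLinearMap fA.toLinearMap (LinearMap.ext hfg)

theorem GL_finite_quot {k A B : Type u} [Field k] [CommRing A] [CommRing B] [Algebra k B]
    (φ : A →+* B) (hφ : φ.Finite) (ε : A →+* k) (I : Ideal B)
    (h : ∀ a, φ a - algebraMap k B (ε a) ∈ I) : Module.Finite k (B ⧸ I) := by
  have h1 : ((Ideal.Quotient.mk I).comp φ).Finite :=
    (RingHom.Finite.of_surjective _ Ideal.Quotient.mk_surjective).comp hφ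
  have h2 : (Ideal.Quotient.mk I).comp φ = (algebraMap k (B ⧸ I)).comp ε := by
    ext a
    exact Ideal.Quotient.eq.mpr (h a)
  rw [h2] at h1
  exact RingHom.finite_algebraMap.mp h1.of_comp_finite

theorem GLphi_finite_flat (k : Type u) [Field k] (d n : ℕ) (p : Fin n → ℕ) (hp : ∀ i, 0 < p i)
    (lam : Fin n → Fin (d + 1) → k) (s : Fin (d + 1) → Fin n)
    (N : Matrix (Fin (d + 1)) (Fin (d + 1)) k)
    (hMN : Matrix.of (fun m => lam (s m)) * N = 1)
    (hNM : N * Matrix.of (fun m => lam (s m)) = 1) :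
    (GLphi k d n p lam s).Finite ∧ (GLphi k d n p lam s).Flat := by
  let _ : Algebra (MvPolynomial (Fin (d + 1)) k) (GLring k d n p lam) :=
    (GLphi k d n p lam s).toAlgebra
  have halg : algebraMap (MvPolynomial (Fin (d + 1)) k) (GLring k d n p lam) =
    GLphi k d n p lam s := rfl
  let t : Fin (d + 1) → MvPolynomial (Fin (d + 1)) k := fun j => ∑ m, C (N j m) * X m
  let a : Fin n → MvPolynomial (Fin (d + 1)) k := fun i => ∑ j, C (lam i j) * t j
  have hMN' : ∀ i m, ∑ j, lam (s i) j * N j m = if i = m then 1 else 0 := by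
    intro i m
    have := congrFun (congrFun hMN i) m
    simpa [Matrix.mul_apply, Matrix.one_apply] using this
  have hNM' : ∀ i m, ∑ j, N i j * lam (s j) m = if i = m then 1 else 0 := by
    intro i m
    have := congrFun (congrFun hNM i) m
    simpa [Matrix.mul_apply, Matrix.one_apply] using this
  have ha : ∀ m, a (s m) = X m := by
    intro m
    simp only [a, t, Finset.mul_sum]
    rw [Finset.sum_comm]
    simp only [← mul_assoc, ← C_mul, ← Finset.sum_mul, ← map_sum, hMN']
    simp
  have ht : ∀ j, GLphi k d n p lam s (t j) =
      Ideal.Quotient.mk (Ideal.span (Set.range (GLh k d n p lam))) (X (Sum.inl j)) := by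
    intro j
    simp only [t, GLphi, map_sum, map_mul, coe_eval₂Hom, eval₂_C, eval₂_X, map_pow, GL_rel_s15,
      Finset.mul_sum]
    rw [Finset.sum_comm]
    simp only [← mul_assoc, ← map_mul, ← Finset.sum_mul, ← map_sum, hNM']
    simp
  have hC : ∀ c, GLphi k d n p lam s (C c) = algebraMap k _ c := by
    intro c; simp [GLphi]
  obtain ⟨R, _, _, _, _, x, hx, hR⟩ := GL_exists_roots n (MvPolynomial (Fin (d + 1)) k) p hp a
  obtain ⟨f, hf⟩ := hR (GLring k d n p lam)
    (fun i => Ideal.Quotient.mk (Ideal.span (Set.range (GLh k d n p lam))) (X (Sum.inr i))) (by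
      intro i
      rw [GL_rel_s15, halg]
      simp only [a, map_sum, map_mul, ht, hC])
  let g0 : MvPolynomial (Fin (d + 1) ⊕ Fin n) k →+* R :=
    eval₂Hom ((algebraMap (MvPolynomial (Fin (d + 1)) k) R).comp C)
      (Sum.elim (fun j => algebraMap _ R (t j)) x)
  have hg0 : ∀ y ∈ Ideal.span (Set.range (GLh k d n p lam)), g0 y = 0 := by
    intro y hy
    have : Ideal.span (Set.range (GLh k d n p lam)) ≤ RingHom.ker g0 := by
      rw [Ideal.span_le]
      rintro _ ⟨i, rfl⟩
      simp only [SetLike.mem_coe, RingHom.mem_ker, GLh, g0, map_sub, map_pow, map_sum, map_mul,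
        coe_eval₂Hom, eval₂_X, eval₂_C, Sum.elim_inr, Sum.elim_inl, hx, a, RingHom.comp_apply,
        sub_self]
    exact this hy
  let g : GLring k d n p lam →+* R := Ideal.Quotient.lift _ g0 hg0
  have hgC : ∀ c, g (algebraMap k _ c) = algebraMap (MvPolynomial (Fin (d + 1)) k) R (C c) := by
    intro c
    have : g (Ideal.Quotient.mk _ (C c)) = algebraMap (MvPolynomial (Fin (d + 1)) k) R (C c) := by
      simp [g, g0]
    exact this
  have hgX : ∀ i, g (Ideal.Quotient.mk _ (X (Sum.inr i))) = x i := by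
    intro i; simp [g, g0]
  have hgT : ∀ j, g (Ideal.Quotient.mk _ (X (Sum.inl j))) = algebraMap _ R (t j) := by
    intro i; simp [g, g0]
  have hfg : ∀ y, f (g y) = y := by
    have : ((f : R →+* GLring k d n p lam).comp g) = RingHom.id _ := by
      apply Ideal.Quotient.ringHom_ext
      apply MvPolynomial.ringHom_ext
      · intro c
        have h1 : f (g (algebraMap k _ c)) = algebraMap k _ c := by
          rw [hgC, f.commutes, halg, hC]
        exact h1
      · rintro (j | i)
        · simp only [RingHom.comp_apply, hgT, RingHom.coe_coe, f.commutes, halg, ht,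
            RingHom.id_apply]
        · simp only [RingHom.comp_apply, hgX, RingHom.coe_coe, hf, RingHom.id_apply]
    exact fun y => RingHom.congr_fun this y
  have hgA : ∀ y, g (algebraMap (MvPolynomial (Fin (d + 1)) k) _ y) = algebraMap _ R y := by
    have : g.comp (algebraMap (MvPolynomial (Fin (d + 1)) k) _) = algebraMap _ R := by
      apply MvPolynomial.ringHom_ext
      · intro c
        rw [RingHom.comp_apply, halg, hC, hgC]
      · intro m
        rw [RingHom.comp_apply, halg]
        simp only [GLphi, coe_eval₂Hom, eval₂_X, map_pow, hgX, hx, ha]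
    exact fun y => RingHom.congr_fun this y
  exact GL_retract (GLphi k d n p lam s) (f : R →+* GLring k d n p lam) g
    (fun a => f.commutes a) hgA hfg

theorem GL_X_weaklyRegular (k : Type u) [Field k] (m : ℕ) :
    RingTheory.Sequence.IsWeaklyRegular (MvPolynomial (Fin m) k)
      (List.ofFn (fun i : Fin m => (X i : MvPolynomial (Fin m) k))) := by
  constructor
  intro i hi
  have him : i < m := by simpa using hi
  have hid : (Ideal.ofList ((List.ofFn (fun i : Fin m => (X i : MvPolynomial (Fin m) k))).take i)
      • ⊤ : Submodule (MvPolynomial (Fin m) k) (MvPolynomial (Fin m) k)) =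
      Ideal.span (X '' {j : Fin m | j.val < i}) := by
    rw [smul_eq_mul, Ideal.mul_top, Ideal.ofList]
    congr 1
    ext y
    simp only [List.mem_take_iff_getElem, List.getElem_ofFn, Set.mem_ofPred_eq, Set.mem_image,
      List.length_ofFn]
    constructor
    · rintro ⟨j, hj, rfl⟩
      exact ⟨⟨j, by omega⟩, by simp; omega, rfl⟩
    · rintro ⟨j, hj, rfl⟩
      exact ⟨j, by omega, rfl⟩
  rw [hid, List.getElem_ofFn, isSMulRegular_quotient_iff_mem_of_smul_mem]
  intro q hq
  rw [smul_eq_mul, mem_ideal_span_X_image] at hq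
  rw [mem_ideal_span_X_image]
  intro e he
  obtain ⟨j, hj, hje⟩ := hq (Finsupp.single ⟨i, him⟩ 1 + e) (by
    rw [mem_support_iff, coeff_X_mul]
    exact mem_support_iff.mp he)
  refine ⟨j, hj, ?_⟩
  have hne : (⟨i, him⟩ : Fin m) ≠ j := by
    rintro rfl
    simp at hj
  simpa [Finsupp.single_apply, hne] using hje

theorem GL_weaklyRegular_map {A B : Type u} [CommRing A] [CommRing B] (f : A →+* B)
    (hf : f.Flat) {rs : List A} (h : RingTheory.Sequence.IsWeaklyRegular A rs) :
    RingTheory.Sequence.IsWeaklyRegular B (rs.map f) := by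
  let _ : Algebra A B := f.toAlgebra
  have : Module.Flat A B := hf
  exact h.of_flat (S := B)

/-- Assume `n ≥ d + 1` and that the hyperplanes `ℓ_1,…,ℓ_n` are in
general position (any at most `d+1` of them are linearly independent). If
`J ⊆ {1,…,n}` has `|J| = n − d − 1`, then the images of the `X_i^{p_i}` for `i ∈ Jᶜ`
form a regular sequence in `R`, and `F = R/(X_i^{p_i} ∣ i ∈ Jᶜ)` is a
finite-dimensional `k`-vector space. -/
theorem X_pow_regular_and_quotient_finiteDimensional (k : Type*) [Field k]
    (d n : ℕ) (hd : 1 ≤ d) (hn : d + 1 ≤ n) (p : Fin n → ℕ) (hp : ∀ i, 0 < p i)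
    (lam : Fin n → Fin (d + 1) → k)
    (hgen : ∀ t : Finset (Fin n), t.card ≤ d + 1 →
      LinearIndependent k (fun i : t => lam i))
    (J : Finset (Fin n)) (hJ : J.card = n - d - 1) :
    RingTheory.Sequence.IsRegular (GLring k d n p lam)
      ((Jᶜ.sort (· ≤ ·)).map fun i =>
        Ideal.Quotient.mk (Ideal.span (Set.range (GLh k d n p lam)))
          (X (Sum.inr i) ^ p i)) ∧
    FiniteDimensional k
      (GLring k d n p lam ⧸ Ideal.span
        ((fun i => Ideal.Quotient.mk (Ideal.span (Set.range (GLh k d n p lam)))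
          (X (Sum.inr i) ^ p i)) '' (Jᶜ : Set (Fin n)))) := by
  classical
  have hcard : Jᶜ.card = d + 1 := by
    rw [Finset.card_compl, Fintype.card_fin, hJ]; omega
  let s : Fin (d + 1) → Fin n := Jᶜ.orderEmbOfFin hcard
  have hs : Jᶜ.sort (· ≤ ·) = List.ofFn s := by
    apply List.ext_getElem
    · simp [hcard]
    · intro i h1 h2
      rw [List.getElem_ofFn]
      simp only [s, Finset.orderEmbOfFin_apply]
      rfl
  have hrange : Set.range s = ((Jᶜ : Finset (Fin n)) : Set (Fin n)) :=
    Finset.range_orderEmbOfFin _ hcard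
  have hli : LinearIndependent k (fun m => lam (s m)) :=
    (hgen Jᶜ hcard.le).comp (Jᶜ.orderIsoOfFin hcard) (Jᶜ.orderIsoOfFin hcard).injective
  have hunit : IsUnit (Matrix.of (fun m => lam (s m))) :=
    Matrix.linearIndependent_rows_iff_isUnit.mp hli
  obtain ⟨u, hu⟩ := hunit
  obtain ⟨hfin, hflat⟩ := GLphi_finite_flat k d n p hp lam s (↑u⁻¹)
    (by rw [← hu]; simp) (by rw [← hu]; simp)
  have hphiX : ∀ m, GLphi k d n p lam s (X m) = Ideal.Quotient.mk _ (X (Sum.inr (s m)) ^ p (s m)) := by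
    intro m; simp [GLphi]
  refine ⟨⟨?_, ?_⟩, ?_⟩
  · have h := GL_weaklyRegular_map _ hflat (GL_X_weaklyRegular k (d + 1))
    have hl : (Jᶜ.sort (· ≤ ·)).map (fun i =>
        Ideal.Quotient.mk (Ideal.span (Set.range (GLh k d n p lam)))
          (X (Sum.inr i) ^ p i)) =
        (List.ofFn (fun i : Fin (d + 1) => (X i : MvPolynomial (Fin (d + 1)) k))).map
          (GLphi k d n p lam s) := by
      rw [hs, List.map_ofFn, List.map_ofFn]
      congr 1
      funext m
      exact (hphiX m).symm
    rw [hl]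
    exact h
  · let e0 : MvPolynomial (Fin (d + 1) ⊕ Fin n) k →+* k := constantCoeff
    have he0 : ∀ y ∈ Ideal.span (Set.range (GLh k d n p lam)), e0 y = 0 := by
      intro y hy
      have : Ideal.span (Set.range (GLh k d n p lam)) ≤ RingHom.ker e0 := by
        rw [Ideal.span_le]
        rintro _ ⟨i, rfl⟩
        simp [RingHom.mem_ker, GLh, e0, (hp i).ne']
      exact this hy
    let e : GLring k d n p lam →+* k := Ideal.Quotient.lift _ e0 he0
    intro htop
    rw [smul_eq_mul, Ideal.mul_top] at htop
    have hle : Ideal.ofList ((Jᶜ.sort (· ≤ ·)).map fun i =>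
        Ideal.Quotient.mk (Ideal.span (Set.range (GLh k d n p lam)))
          (X (Sum.inr i) ^ p i)) ≤ RingHom.ker e := by
      rw [Ideal.ofList, Ideal.span_le]
      intro y hy
      simp only [Set.mem_ofPred_eq, List.mem_map] at hy
      obtain ⟨i, -, rfl⟩ := hy
      simp [RingHom.mem_ker, e, e0, (hp i).ne']
    rw [← htop] at hle
    have h1 : e 1 = 0 := hle Submodule.mem_top
    simp at h1
  · refine GL_finite_quot (GLphi k d n p lam s) hfin constantCoeff _ ?_
    intro a
    induction a using MvPolynomial.induction_on with
    | C c =>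
      simp only [GLphi, coe_eval₂Hom, eval₂_C, constantCoeff_C, sub_self]
      exact Ideal.zero_mem _
    | add a b ha hb =>
      have := Ideal.add_mem _ ha hb
      rw [map_add, map_add, map_add, add_sub_add_comm]
      exact this
    | mul_X a m _ =>
      rw [map_mul, map_mul, constantCoeff_X, mul_zero, map_zero, sub_zero, hphiX]
      refine Ideal.mul_mem_left _ _ (Ideal.subset_span ⟨s m, ?_, rfl⟩)
      have : s m ∈ Set.range s := ⟨m, rfl⟩
      rw [hrange] at this
      simpa using this
end
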